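/- arXiv:1602.00461 — 4 statements merged into one kernel-verified Lean document; each statement's English description precedes it below -/
import Mathlib

section
/- Let p≥1 and let {ψ_j : j≥0} ⊂ ℝ satisfy Σ_{j=0}^∞ |ψ_j| < ∞. Then 𝒲_n(p) = O(n^{1/p}) as n→∞; that is, there is a constant C such that 𝒲_n(p) ≤ C·n^{1/p} for all n≥1. -/
open Filter

/-- The coefficients `ψ` extended to `ℤ` by `ψ_j = 0` for `j < 0`. -/
noncomputable def psiZ (ψ : ℕ → ℝ) : ℤ → ℝ := fun j => if 0 ≤ j then ψ j.toNat else 0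

/-- `w_{nj} = ∑_{k=1}^n ψ_{k-j}`. -/
noncomputable def wCoef (ψ : ℕ → ℝ) (n : ℕ) (j : ℤ) : ℝ :=
  ∑ k ∈ Finset.Icc (1 : ℤ) (n : ℤ), psiZ ψ (k - j)

/-- `𝒲_n(p) = (∑_{j=-∞}^n |w_{nj}|^p)^{1/p}`; since `w_{nj} = 0` for `j > n`, the sum
may be taken over all of `ℤ`. -/
noncomputable def Wnorm (ψ : ℕ → ℝ) (p : ℝ) (n : ℕ) : ℝ :=
  (∑' j : ℤ, |wCoef ψ n j| ^ p) ^ (1 / p)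

/-!
Up to reflection, `w_n` is the convolution of `ψ` with the indicator of `{1, …, n}`. With
`S = ∑ |ψ_j|`, this gives both `sup_j |w_{nj}| ≤ S` and `∑_j |w_{nj}| ≤ n S`. Interpolating,
`∑_j |w_{nj}|^p ≤ S^{p-1} ∑_j |w_{nj}| ≤ n S^p`, so the constant `C = S` works.
-/

section Interpolation

variable {ι : Type*} {a : ι → ℝ} {M p : ℝ}

theorem rpow_le_rpow_sub_one_mul {x : ℝ} (hx : 0 ≤ x) (hxM : x ≤ M) (hp : 1 ≤ p) :
    x ^ p ≤ M ^ (p - 1) * x := by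
  calc x ^ p = x ^ (p - 1) * x := by
        rw [← Real.rpow_add_one' hx (by linarith), sub_add_cancel]
    _ ≤ M ^ (p - 1) * x := by gcongr

theorem summable_rpow_of_le (ha : Summable a) (ha₀ : ∀ i, 0 ≤ a i) (haM : ∀ i, a i ≤ M)
    (hp : 1 ≤ p) : Summable fun i => a i ^ p :=
  .of_nonneg_of_le (fun i => Real.rpow_nonneg (ha₀ i) p)
    (fun i => rpow_le_rpow_sub_one_mul (ha₀ i) (haM i) hp) (ha.mul_left _)

theorem tsum_rpow_le_of_le (ha : Summable a) (ha₀ : ∀ i, 0 ≤ a i) (haM : ∀ i, a i ≤ M)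
    (hp : 1 ≤ p) : ∑' i, a i ^ p ≤ M ^ (p - 1) * ∑' i, a i := by
  rw [← tsum_mul_left]
  exact (summable_rpow_of_le ha ha₀ haM hp).tsum_le_tsum
    (fun i => rpow_le_rpow_sub_one_mul (ha₀ i) (haM i) hp) (ha.mul_left _)

end Interpolation

section SumTranslates

variable {G E : Type*} [AddGroup G] [SeminormedAddCommGroup E] {f : G → E}

theorem norm_sum_sub_le_tsum_norm (hf : Summable fun i => ‖f i‖) (s : Finset G) (j : G) :
    ‖∑ k ∈ s, f (k - j)‖ ≤ ∑' i, ‖f i‖ := by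
  have hfj : Summable fun k => ‖f (k - j)‖ := (Equiv.subRight j).summable_iff.2 hf
  calc ‖∑ k ∈ s, f (k - j)‖ ≤ ∑ k ∈ s, ‖f (k - j)‖ := norm_sum_le _ _
    _ ≤ ∑' k, ‖f (k - j)‖ := hfj.sum_le_tsum _ fun _ _ => norm_nonneg _
    _ = ∑' i, ‖f i‖ := (Equiv.subRight j).tsum_eq fun i => ‖f i‖

theorem summable_norm_sum_sub (hf : Summable fun i => ‖f i‖) (s : Finset G) :
    Summable fun j => ‖∑ k ∈ s, f (k - j)‖ :=
  .of_nonneg_of_le (fun _ => norm_nonneg _) (fun _ => norm_sum_le _ _)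
    (summable_sum fun k _ => (Equiv.subLeft k).summable_iff.2 hf)

theorem tsum_norm_sum_sub_le (hf : Summable fun i => ‖f i‖) (s : Finset G) :
    ∑' j, ‖∑ k ∈ s, f (k - j)‖ ≤ s.card * ∑' i, ‖f i‖ := by
  have hf_sub : ∀ k ∈ s, Summable fun j => ‖f (k - j)‖ := fun k _ =>
    (Equiv.subLeft k).summable_iff.2 hf
  calc ∑' j, ‖∑ k ∈ s, f (k - j)‖
      ≤ ∑' j, ∑ k ∈ s, ‖f (k - j)‖ :=
        (summable_norm_sum_sub hf s).tsum_le_tsum (fun _ => norm_sum_le _ _) (summable_sum hf_sub)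
    _ = ∑ k ∈ s, ∑' j, ‖f (k - j)‖ := Summable.tsum_finsetSum hf_sub
    _ = ∑ _k ∈ s, ∑' i, ‖f i‖ :=
        Finset.sum_congr rfl fun k _ => (Equiv.subLeft k).tsum_eq fun i => ‖f i‖
    _ = s.card * ∑' i, ‖f i‖ := by rw [Finset.sum_const, nsmul_eq_mul]

theorem tsum_norm_sum_sub_rpow_le {p : ℝ} (hp : 1 ≤ p) (hf : Summable fun i => ‖f i‖)
    (s : Finset G) :
    ∑' j, ‖∑ k ∈ s, f (k - j)‖ ^ p ≤ s.card * (∑' i, ‖f i‖) ^ p := by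
  set S := ∑' i, ‖f i‖
  have hS : 0 ≤ S := tsum_nonneg fun _ => norm_nonneg _
  calc ∑' j, ‖∑ k ∈ s, f (k - j)‖ ^ p
      ≤ S ^ (p - 1) * ∑' j, ‖∑ k ∈ s, f (k - j)‖ :=
        tsum_rpow_le_of_le (summable_norm_sum_sub hf s) (fun _ => norm_nonneg _)
          (norm_sum_sub_le_tsum_norm hf s) hp
    _ ≤ S ^ (p - 1) * (s.card * S) := by gcongr; exact tsum_norm_sum_sub_le hf s
    _ = s.card * (S ^ (p - 1) * S) := by ring
    _ = s.card * S ^ p := by rw [← Real.rpow_add_one' hS (by linarith), sub_add_cancel]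

end SumTranslates

section Coefficients

variable {ψ : ℕ → ℝ}

theorem hasSum_abs_psiZ_iff {S : ℝ} :
    HasSum (fun j => |psiZ ψ j|) S ↔ HasSum (fun j => |ψ j|) S := by
  have psiZ_eq_zero : ∀ j ∉ Set.range ((↑) : ℕ → ℤ), |psiZ ψ j| = 0 := fun j hj => by
    have hneg : ¬ 0 ≤ j := fun h => hj ⟨j.toNat, Int.toNat_of_nonneg h⟩
    simp [psiZ, hneg]
  rw [← Function.Injective.hasSum_iff Nat.cast_injective psiZ_eq_zero]
  simp [Function.comp_def, psiZ]

theorem tsum_abs_wCoef_rpow_le {p : ℝ} (hp : 1 ≤ p) (hψ : Summable fun j => |ψ j|) (n : ℕ) :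
    ∑' j, |wCoef ψ n j| ^ p ≤ n * (∑' j, |ψ j|) ^ p := by
  have hpsiZ : HasSum (fun j => |psiZ ψ j|) (∑' j, |ψ j|) := hasSum_abs_psiZ_iff.2 hψ.hasSum
  have young := tsum_norm_sum_sub_rpow_le (f := psiZ ψ) hp hpsiZ.summable (Finset.Icc (1 : ℤ) n)
  simp only [Real.norm_eq_abs, hpsiZ.tsum_eq, Int.card_Icc, add_sub_cancel_right,
    Int.toNat_natCast] at young
  exact young

theorem Wnorm_le {p : ℝ} (hp : 1 ≤ p) (hψ : Summable fun j => |ψ j|) (n : ℕ) :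
    Wnorm ψ p n ≤ (∑' j, |ψ j|) * (n : ℝ) ^ (1 / p) := by
  set S := ∑' j, |ψ j|
  have hS : 0 ≤ S := tsum_nonneg fun _ => abs_nonneg _
  calc Wnorm ψ p n ≤ (n * S ^ p) ^ (1 / p) := by
        refine Real.rpow_le_rpow (tsum_nonneg fun _ => by positivity) ?_ (by positivity)
        exact tsum_abs_wCoef_rpow_le hp hψ n
    _ = (n : ℝ) ^ (1 / p) * (S ^ p) ^ (1 / p) := Real.mul_rpow (by positivity) (by positivity)
    _ = S * (n : ℝ) ^ (1 / p) := by
        rw [one_div, Real.rpow_rpow_inv hS (by positivity), mul_comm]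

end Coefficients

theorem Wnorm_bigO_of_summable
    (p : ℝ) (hp : 1 ≤ p) (ψ : ℕ → ℝ) (hψ : Summable fun j => |ψ j|) :
    ∃ C : ℝ, ∀ n : ℕ, 1 ≤ n → Wnorm ψ p n ≤ C * (n : ℝ) ^ (1 / p) :=
  ⟨∑' j, |ψ j|, fun n _ => Wnorm_le hp hψ n⟩
end

section
/- Let p>1 and 1/p<d<1, and let ψ_j = (j+1)^{-d} for j≥0. Then 𝒲_n(p) ~ c·n^{1/p+1-d} as n→∞ for some positive constant c; i.e., 𝒲_n(p)/n^{1/p+1-d} converges to a positive limit. -/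
open Filter

/-!
Put `q = 1 - d`. The coefficient `w_{n, n - i}` is the sum of `ψ` over the last `n` indices up to
`i`, so for `i ≈ n x` it is asymptotic to `n ^ q / q * (x ^ q - (x - 1)₊ ^ q)`. Hence
`n⁻¹ * ∑ᵢ |n ^ (-q) * w_{n, n - i}| ^ p` is the integral over `(0, ∞)` of a step function of `x`
converging pointwise. By comparing `ψ j` with the increments of the concave function `t ↦ t ^ q`,
this step function is dominated by a multiple of `max 1 x ^ (-d p)`, integrable as `d p > 1`.
-/

open MeasureTheory Set Topology

section RiemannSum

lemma map_natFloor_volume_restrict_Ioi :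
    (volume.restrict (Ioi (0 : ℝ))).map (fun x ↦ ⌊x⌋₊) = Measure.count := by
  refine Measure.ext_of_singleton fun k ↦ ?_
  have hpreimage : (fun x : ℝ ↦ ⌊x⌋₊) ⁻¹' {k} ∩ Ici 0 = Ico (k : ℝ) (k + 1) := by
    ext x
    simp only [mem_inter_iff, mem_preimage, mem_singleton_iff, mem_Ici, mem_Ico]
    refine ⟨fun ⟨hfloor, hx⟩ ↦ (Nat.floor_eq_iff hx).1 hfloor, fun hx ↦ ?_⟩
    have hx0 : 0 ≤ x := k.cast_nonneg.trans hx.1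
    exact ⟨(Nat.floor_eq_iff hx0).2 hx, hx0⟩
  rw [Measure.map_apply Nat.measurable_floor (measurableSet_singleton k), Measure.count_singleton,
    restrict_Ioi_eq_restrict_Ici,
    Measure.restrict_apply (Nat.measurable_floor (measurableSet_singleton k)), hpreimage]
  simp

lemma integral_comp_natFloor_mul (f : ℕ → ℝ) {a : ℝ} (ha : 0 < a) :
    ∫ x in Ioi (0 : ℝ), f ⌊a * x⌋₊ = a⁻¹ * ∑' i, f i := by
  rw [integral_comp_mul_left_Ioi (fun x ↦ f ⌊x⌋₊) 0 ha, mul_zero, smul_eq_mul,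
    ← integral_map (f := f) Nat.measurable_floor.aemeasurable
      measurable_from_nat.aestronglyMeasurable, map_natFloor_volume_restrict_Ioi]
  congr 1
  by_cases hf : Integrable f Measure.count
  · simp [integral_countable hf]
  · rw [integral_undef hf,
      tsum_eq_zero_of_not_summable fun hs : Summable f ↦ hf (integrable_count_iff.2 hs.norm)]

lemma tendsto_inv_mul_tsum_of_dominated {f : ℕ → ℕ → ℝ} {g B : ℝ → ℝ}
    (hB : IntegrableOn B (Ioi 0))
    (hfB : ∀ᶠ n : ℕ in atTop, ∀ x : ℝ, 0 < x → ‖f n ⌊n * x⌋₊‖ ≤ B x)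
    (hfg : ∀ x : ℝ, 0 < x → Tendsto (fun n : ℕ ↦ f n ⌊n * x⌋₊) atTop (𝓝 (g x))) :
    Tendsto (fun n : ℕ ↦ (n : ℝ)⁻¹ * ∑' i, f n i) atTop (𝓝 (∫ x in Ioi 0, g x)) := by
  have hmeas (n : ℕ) : Measurable fun x : ℝ ↦ f n ⌊n * x⌋₊ :=
    measurable_from_nat.comp (Nat.measurable_floor.comp (measurable_const_mul (n : ℝ)))
  have hlim : Tendsto (fun n : ℕ ↦ ∫ x in Ioi (0 : ℝ), f n ⌊n * x⌋₊) atTop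
      (𝓝 (∫ x in Ioi 0, g x)) :=
    tendsto_integral_filter_of_dominated_convergence B
      (.of_forall fun n ↦ (hmeas n).aestronglyMeasurable)
      (hfB.mono fun n hn ↦ ae_restrict_of_forall_mem measurableSet_Ioi hn) hB
      (ae_restrict_of_forall_mem measurableSet_Ioi hfg)
  refine hlim.congr' ?_
  filter_upwards [eventually_gt_atTop 0] with n hn
  exact integral_comp_natFloor_mul (f n) (Nat.cast_pos.2 hn)

lemma tendsto_natFloor_add_one_div {x : ℝ} (hx : 0 ≤ x) :
    Tendsto (fun n : ℕ ↦ ((⌊n * x⌋₊ + 1 : ℕ) : ℝ) / n) atTop (𝓝 x) := by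
  have h := ((tendsto_nat_floor_mul_div_atTop hx).comp tendsto_natCast_atTop_atTop).add
    (tendsto_inv_atTop_nhds_zero_nat (𝕜 := ℝ))
  rw [add_zero] at h
  exact h.congr fun n ↦ by simp [mul_comm x, add_div]

lemma natCast_sub_div_self (m : ℕ) {n : ℕ} (hn : 0 < n) :
    ((m - n : ℕ) : ℝ) / n = max ((m : ℝ) / n - 1) 0 := by
  have hn' : (0 : ℝ) < n := Nat.cast_pos.2 hn
  rcases le_total n m with h | h
  · rw [Nat.cast_sub h, sub_div, div_self hn'.ne', max_eq_left]
    rw [sub_nonneg, one_le_div hn']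
    exact Nat.cast_le.2 h
  · rw [Nat.sub_eq_zero_of_le h, Nat.cast_zero, zero_div, max_eq_right]
    rw [sub_nonpos, div_le_one hn']
    exact Nat.cast_le.2 h

end RiemannSum

lemma rpow_integral_abs_const_mul {α : Type*} [MeasurableSpace α] {p : ℝ} (hp : p ≠ 0)
    (μ : Measure α) (c : ℝ) (g : α → ℝ) :
    (∫ x, |c * g x| ^ p ∂μ) ^ (1 / p) = |c| * (∫ x, |g x| ^ p ∂μ) ^ (1 / p) := by
  have hterm (x : α) : |c * g x| ^ p = |c| ^ p * |g x| ^ p := by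
    rw [abs_mul, Real.mul_rpow (abs_nonneg _) (abs_nonneg _)]
  simp only [hterm]
  rw [integral_const_mul, Real.mul_rpow (by positivity) (by positivity),
    ← Real.rpow_mul (abs_nonneg c), mul_one_div_cancel hp, Real.rpow_one]

section Concavity

variable {q : ℝ}

lemma rpow_sub_rpow_le {a b : ℝ} (hq0 : 0 ≤ q) (hq1 : q ≤ 1) (ha : 0 < a) (hb : 0 ≤ b) :
    b ^ q - a ^ q ≤ q * a ^ (q - 1) * (b - a) := by
  have hs : -1 ≤ b / a - 1 := by
    have : 0 ≤ b / a := by positivity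
    linarith
  have h := rpow_one_add_le_one_add_mul_self hs hq0 hq1
  rw [add_sub_cancel, Real.div_rpow hb ha.le, div_le_iff₀ (by positivity)] at h
  calc b ^ q - a ^ q ≤ (1 + q * (b / a - 1)) * a ^ q - a ^ q := by gcongr
    _ = q * a ^ (q - 1) * (b - a) := by
      rw [Real.rpow_sub_one ha.ne']
      field_simp
      ring

lemma le_rpow_succ_sub_rpow (hq0 : 0 ≤ q) (hq1 : q ≤ 1) (j : ℕ) :
    q * ((j : ℝ) + 1) ^ (q - 1) ≤ ((j : ℝ) + 1) ^ q - (j : ℝ) ^ q := by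
  have h := rpow_sub_rpow_le hq0 hq1 j.cast_add_one_pos j.cast_nonneg
  linarith

lemma tendsto_rpow_succ_sub_rpow (hq0 : 0 ≤ q) (hq1 : q ≤ 1) :
    Tendsto (fun j : ℕ ↦ (((j : ℝ) + 1) ^ q - (j : ℝ) ^ q) * ((j : ℝ) + 1) ^ (1 - q))
      atTop (𝓝 q) := by
  have hupper : Tendsto (fun j : ℕ ↦ q * ((j : ℝ) / (j + 1)) ^ (q - 1)) atTop (𝓝 q) := by
    simpa using ((tendsto_natCast_div_add_atTop (1 : ℝ)).rpow_const
      (p := q - 1) (Or.inl one_ne_zero)).const_mul q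
  have hinv (j : ℕ) : (((j : ℝ) + 1) ^ (q - 1))⁻¹ = ((j : ℝ) + 1) ^ (1 - q) := by
    rw [← Real.rpow_neg (by positivity), neg_sub]
  refine tendsto_of_tendsto_of_tendsto_of_le_of_le' tendsto_const_nhds hupper ?_ ?_
  · refine .of_forall fun j ↦ ?_
    rw [← hinv, ← div_eq_mul_inv, le_div_iff₀ (by positivity)]
    exact le_rpow_succ_sub_rpow hq0 hq1 j
  · filter_upwards [eventually_gt_atTop 0] with j hj
    rw [Real.div_rpow (by positivity) (by positivity), ← mul_div_assoc, div_eq_mul_inv, hinv]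
    gcongr
    simpa using rpow_sub_rpow_le hq0 hq1 (Nat.cast_pos.2 hj) j.cast_add_one_pos.le

end Concavity

section RpowIncrement

variable {p q : ℝ}

/-- The increment of `t ↦ t₊ ^ q` over `[x - 1, x]`, for `x ≥ 0`. For `ψ j = (j + 1) ^ (q - 1)`,
it is `q` times the limit of `n ^ (-q) * w_{n, n - i}` as `n → ∞` with `i / n → x`. -/
noncomputable def rpowIncrement (q x : ℝ) : ℝ := x ^ q - max (x - 1) 0 ^ q

lemma rpowIncrement_pos (hq : 0 < q) {x : ℝ} (hx : 0 < x) : 0 < rpowIncrement q x :=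
  sub_pos.2 (Real.rpow_lt_rpow (le_max_right _ _) (max_lt (by linarith) hx) hq)

lemma continuous_rpowIncrement (hq : 0 ≤ q) : Continuous (rpowIncrement q) :=
  (continuous_id.rpow_const fun _ ↦ Or.inr hq).sub
    (((continuous_sub_right 1).max continuous_const).rpow_const fun _ ↦ Or.inr hq)

lemma rpowIncrement_le (hq0 : 0 ≤ q) (hq1 : q ≤ 1) {x : ℝ} (hx : 0 ≤ x) :
    rpowIncrement q x ≤ max 1 x ^ (q - 1) := by
  rcases le_total x 1 with hx1 | hx1
  · rw [max_eq_left hx1, Real.one_rpow]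
    exact (sub_le_self _ (by positivity)).trans (Real.rpow_le_one hx hx1 hq0)
  · have hx0 : 0 < x := by linarith
    have ht0 : 0 ≤ (x - 1) / x := div_nonneg (by linarith) hx
    have ht1 : (x - 1) / x ≤ 1 := (div_le_one hx0).2 (by linarith)
    rw [rpowIncrement, max_eq_right hx1, max_eq_left (sub_nonneg.2 hx1)]
    calc x ^ q - (x - 1) ^ q = x ^ q * (1 - ((x - 1) / x) ^ q) := by
          rw [Real.div_rpow (sub_nonneg.2 hx1) hx]
          field_simp
      _ ≤ x ^ q * (1 - (x - 1) / x) := by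
          gcongr
          exact Real.self_le_rpow_of_le_one ht0 ht1 hq1
      _ = x ^ (q - 1) := by
          rw [Real.rpow_sub_one hx0.ne']
          field_simp
          ring

lemma integrableOn_Ioi_max_one_rpow {r : ℝ} (hr : r < -1) :
    IntegrableOn (fun x : ℝ ↦ max 1 x ^ r) (Ioi 0) := by
  rw [← Ioc_union_Ioi_eq_Ioi zero_le_one]
  refine .union ?_ ?_
  · refine (integrableOn_const (C := (1 : ℝ)) (by simp)).congr_fun (fun x hx ↦ ?_) measurableSet_Ioc
    simp [max_eq_left hx.2]
  · refine (integrableOn_Ioi_rpow_of_lt hr zero_lt_one).congr_fun (fun x hx ↦ ?_) measurableSet_Ioi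
    simp [max_eq_right (mem_Ioi.1 hx).le]

lemma integrableOn_abs_rpowIncrement_rpow (hq0 : 0 < q) (hq1 : q ≤ 1) (hp : 0 ≤ p)
    (hpq : (q - 1) * p < -1) : IntegrableOn (fun x ↦ |rpowIncrement q x| ^ p) (Ioi 0) := by
  refine (integrableOn_Ioi_max_one_rpow hpq).mono'
    ((continuous_rpowIncrement hq0.le).abs.rpow_const fun _ ↦ Or.inr hp).aestronglyMeasurable
    (ae_restrict_of_forall_mem measurableSet_Ioi fun x hx ↦ ?_)
  rw [Real.norm_of_nonneg (by positivity), Real.rpow_mul (by positivity),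
    abs_of_pos (rpowIncrement_pos hq0 hx)]
  exact Real.rpow_le_rpow (rpowIncrement_pos hq0 hx).le
    (rpowIncrement_le hq0.le hq1 (le_of_lt hx)) hp

lemma integral_abs_rpowIncrement_rpow_pos (hq0 : 0 < q) (hq1 : q ≤ 1) (hp : 0 ≤ p)
    (hpq : (q - 1) * p < -1) : 0 < ∫ x in Ioi 0, |rpowIncrement q x| ^ p := by
  have hpos (x : ℝ) (hx : x ∈ Ioi 0) : 0 < |rpowIncrement q x| ^ p :=
    Real.rpow_pos_of_pos (abs_pos_of_pos (rpowIncrement_pos hq0 hx)) p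
  rw [setIntegral_pos_iff_support_of_nonneg_ae
    (ae_restrict_of_forall_mem measurableSet_Ioi fun x hx ↦ (hpos x hx).le)
    (integrableOn_abs_rpowIncrement_rpow hq0 hq1 hp hpq),
    inter_eq_right.2 fun x hx ↦ Function.mem_support.2 (hpos x hx).ne']
  simp

lemma rpow_sub_rpow_natSub_div (m : ℕ) {n : ℕ} (hn : 0 < n) :
    ((m : ℝ) ^ q - ((m - n : ℕ) : ℝ) ^ q) / (n : ℝ) ^ q = rpowIncrement q (m / n) := by
  rw [rpowIncrement, ← natCast_sub_div_self m hn, Real.div_rpow (by positivity) (by positivity),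
    Real.div_rpow (by positivity) (by positivity), sub_div]

end RpowIncrement

section PartialSums

variable {ψ : ℕ → ℝ} {q A C : ℝ}

lemma abs_sum_Ico_le (hq0 : 0 < q) (hq1 : q ≤ 1)
    (hψ : ∀ j : ℕ, |ψ j * ((j : ℝ) + 1) ^ (1 - q)| ≤ C) {a b : ℕ} (hab : a ≤ b) :
    |∑ j ∈ Finset.Ico a b, ψ j| ≤ C / q * ((b : ℝ) ^ q - (a : ℝ) ^ q) := by
  have hC : 0 ≤ C := (abs_nonneg _).trans (hψ 0)
  have hterm (j : ℕ) : |ψ j| ≤ C / q * (((j + 1 : ℕ) : ℝ) ^ q - (j : ℝ) ^ q) := by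
    have hj := hψ j
    rw [abs_mul, abs_of_pos (by positivity : (0 : ℝ) < ((j : ℝ) + 1) ^ (1 - q)),
      ← le_div_iff₀ (by positivity), div_eq_mul_inv, ← Real.rpow_neg (by positivity),
      neg_sub] at hj
    calc |ψ j| ≤ C * ((j : ℝ) + 1) ^ (q - 1) := hj
      _ = C / q * (q * ((j : ℝ) + 1) ^ (q - 1)) := by field_simp
      _ ≤ C / q * (((j + 1 : ℕ) : ℝ) ^ q - (j : ℝ) ^ q) := by
          push_cast
          gcongr
          exact le_rpow_succ_sub_rpow hq0.le hq1 j
  calc |∑ j ∈ Finset.Ico a b, ψ j|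
      ≤ ∑ j ∈ Finset.Ico a b, C / q * (((j + 1 : ℕ) : ℝ) ^ q - (j : ℝ) ^ q) :=
        (Finset.abs_sum_le_sum_abs _ _).trans (Finset.sum_le_sum fun j _ ↦ hterm j)
    _ = C / q * ((b : ℝ) ^ q - (a : ℝ) ^ q) := by
        rw [← Finset.mul_sum, Finset.sum_Ico_sub (fun j : ℕ ↦ (j : ℝ) ^ q) hab]

lemma abs_sum_Ico_div_le (hq0 : 0 < q) (hq1 : q ≤ 1)
    (hψ : ∀ j : ℕ, |ψ j * ((j : ℝ) + 1) ^ (1 - q)| ≤ C) (m : ℕ) {n : ℕ} (hn : 0 < n) :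
    |(∑ j ∈ Finset.Ico (m - n) m, ψ j) / (n : ℝ) ^ q| ≤ C / q * rpowIncrement q (m / n) := by
  rw [abs_div, abs_of_pos (by positivity : (0 : ℝ) < (n : ℝ) ^ q),
    ← rpow_sub_rpow_natSub_div m hn, ← mul_div_assoc]
  gcongr
  exact abs_sum_Ico_le hq0 hq1 hψ (Nat.sub_le m n)

/-- Stolz–Cesàro, comparing `ψ` with the telescoping increments of `j ↦ j ^ q`. -/
lemma tendsto_sum_range_div_rpow (hq0 : 0 < q) (hq1 : q ≤ 1)
    (hψ : Tendsto (fun j : ℕ ↦ ψ j * ((j : ℝ) + 1) ^ (1 - q)) atTop (𝓝 A)) :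
    Tendsto (fun m : ℕ ↦ (∑ j ∈ Finset.range m, ψ j) / (m : ℝ) ^ q) atTop (𝓝 (A / q)) := by
  set g : ℕ → ℝ := fun j ↦ ((j : ℝ) + 1) ^ q - (j : ℝ) ^ q with hg
  have hgpos (j : ℕ) : 0 < g j :=
    lt_of_lt_of_le (by positivity) (le_rpow_succ_sub_rpow hq0.le hq1 j)
  have hgsum (m : ℕ) : ∑ j ∈ Finset.range m, g j = (m : ℝ) ^ q := by
    simpa [hg, Real.zero_rpow hq0.ne'] using Finset.sum_range_sub (fun j : ℕ ↦ (j : ℝ) ^ q) m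
  have hratio : Tendsto (fun j ↦ ψ j / g j) atTop (𝓝 (A / q)) := by
    refine (hψ.div (tendsto_rpow_succ_sub_rpow hq0.le hq1) hq0.ne').congr fun j ↦ ?_
    exact mul_div_mul_right _ _ (by positivity)
  have hlittle : (fun j ↦ ψ j - A / q * g j) =o[atTop] g := by
    refine (Asymptotics.isLittleO_iff_tendsto fun j hj ↦ absurd hj (hgpos j).ne').2 ?_
    rw [← sub_self (A / q)]
    refine (hratio.sub_const (A / q)).congr fun j ↦ ?_
    rw [sub_div, mul_div_cancel_right₀ _ (hgpos j).ne']
  have hsum := hlittle.sum_range (fun j ↦ (hgpos j).le) (by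
    simpa only [hgsum, Function.comp_def] using
      (tendsto_rpow_atTop hq0).comp tendsto_natCast_atTop_atTop)
  simp only [Finset.sum_sub_distrib, ← Finset.mul_sum, hgsum] at hsum
  rw [← tendsto_sub_nhds_zero_iff]
  refine hsum.tendsto_div_nhds_zero.congr' ?_
  filter_upwards [eventually_gt_atTop 0] with m hm
  rw [sub_div, mul_div_cancel_right₀ _ (by positivity)]

lemma tendsto_comp_div_rpow {u : ℕ → ℝ} {L y : ℝ} {m : ℕ → ℕ} (hq : 0 < q) (hu0 : u 0 = 0)
    (hu : Tendsto (fun k ↦ u k / (k : ℝ) ^ q) atTop (𝓝 L))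
    (hm : Tendsto (fun n ↦ (m n : ℝ) / n) atTop (𝓝 y)) :
    Tendsto (fun n ↦ u (m n) / (n : ℝ) ^ q) atTop (𝓝 (L * y ^ q)) := by
  have hfactor (n : ℕ) :
      u (m n) / (m n : ℝ) ^ q * ((m n : ℝ) / n) ^ q = u (m n) / (n : ℝ) ^ q := by
    rw [Real.div_rpow (by positivity) (by positivity)]
    rcases Nat.eq_zero_or_pos (m n) with h | h
    · simp [h, hu0]
    · field_simp
  have hpow := hm.rpow_const (p := q) (Or.inr hq.le)
  refine Tendsto.congr hfactor ?_
  -- If `y = 0` then `m` need not tend to infinity, but `u k / k ^ q` is bounded.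
  rcases (ge_of_tendsto' hm fun n ↦ by positivity : 0 ≤ y).eq_or_lt with rfl | hy
  · obtain ⟨M, hM⟩ := (Metric.isBounded_range_of_tendsto _ hu).exists_norm_le
    rw [Real.zero_rpow hq.ne'] at hpow ⊢
    rw [mul_zero]
    exact bdd_le_mul_tendsto_zero' M
      (.of_forall fun n ↦ hM _ (mem_range_self (m n))) hpow
  · have hm_atTop : Tendsto m atTop atTop := by
      refine tendsto_natCast_atTop_iff.1 ((hm.pos_mul_atTop hy
        (tendsto_natCast_atTop_atTop (R := ℝ))).congr' ?_)
      filter_upwards [eventually_gt_atTop 0] with n hn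
      field_simp
    exact (hu.comp hm_atTop).mul hpow

lemma tendsto_sum_Ico_div_rpow {x : ℝ} {m : ℕ → ℕ} (hq0 : 0 < q) (hq1 : q ≤ 1)
    (hψ : Tendsto (fun j : ℕ ↦ ψ j * ((j : ℝ) + 1) ^ (1 - q)) atTop (𝓝 A))
    (hm : Tendsto (fun n ↦ (m n : ℝ) / n) atTop (𝓝 x)) :
    Tendsto (fun n ↦ (∑ j ∈ Finset.Ico (m n - n) (m n), ψ j) / (n : ℝ) ^ q) atTop
      (𝓝 (A / q * rpowIncrement q x)) := by
  have hsub : Tendsto (fun n ↦ ((m n - n : ℕ) : ℝ) / n) atTop (𝓝 (max (x - 1) 0)) := by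
    refine ((hm.sub_const 1).max tendsto_const_nhds).congr' ?_
    filter_upwards [eventually_gt_atTop 0] with n hn
    exact (natCast_sub_div_self (m n) hn).symm
  have hu := tendsto_sum_range_div_rpow hq0 hq1 hψ
  rw [rpowIncrement, mul_sub]
  refine ((tendsto_comp_div_rpow hq0 (Finset.sum_range_zero ψ) hu hm).sub
    (tendsto_comp_div_rpow hq0 (Finset.sum_range_zero ψ) hu hsub)).congr fun n ↦ ?_
  rw [Finset.sum_Ico_eq_sub _ (Nat.sub_le _ _), sub_div]

end PartialSums

section Wnorm

variable {ψ : ℕ → ℝ} {p q : ℝ}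

lemma wCoef_natCast_sub (ψ : ℕ → ℝ) (n i : ℕ) :
    wCoef ψ n (n - i) = ∑ l ∈ Finset.Ico (i + 1 - n) (i + 1), ψ l := by
  symm
  refine Finset.sum_of_injOn (fun l ↦ (l : ℤ) + (n - i)) ?_ ?_ ?_ ?_
  · intro a _ b _ hab
    simpa using hab
  · intro l hl
    simp only [Finset.coe_Ico, mem_Ico, Finset.coe_Icc, mem_Icc] at hl ⊢
    omega
  · intro k hk hnot
    rw [Finset.mem_Icc] at hk
    refine if_neg fun hnonneg ↦ hnot ⟨(k - (n - i)).toNat, ?_, ?_⟩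
    · simp only [Finset.coe_Ico, mem_Ico]
      omega
    · simp only
      omega
  · intro l _
    simp [psiZ]

lemma wCoef_eq_zero_of_lt {n : ℕ} {j : ℤ} (hj : n < j) : wCoef ψ n j = 0 := by
  refine Finset.sum_eq_zero fun k hk ↦ if_neg ?_
  rw [Finset.mem_Icc] at hk
  omega

lemma tsum_abs_wCoef_rpow (hp : p ≠ 0) (ψ : ℕ → ℝ) (n : ℕ) :
    ∑' j : ℤ, |wCoef ψ n j| ^ p =
      ∑' i : ℕ, |∑ l ∈ Finset.Ico (i + 1 - n) (i + 1), ψ l| ^ p := by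
  have hinj : Function.Injective fun i : ℕ ↦ (n : ℤ) - i := fun a b h ↦ by simpa using h
  rw [← hinj.tsum_eq]
  · simp only [wCoef_natCast_sub]
  · intro j hj
    have hjn : j ≤ n := by
      by_contra! hlt
      exact hj (by simp [wCoef_eq_zero_of_lt hlt, Real.zero_rpow hp])
    exact ⟨(n - j).toNat, by simp only; omega⟩

lemma Wnorm_div_rpow (hp : p ≠ 0) (ψ : ℕ → ℝ) (q : ℝ) {n : ℕ} (hn : 0 < n) :
    Wnorm ψ p n / (n : ℝ) ^ (1 / p + q) =
      ((n : ℝ)⁻¹ * ∑' i : ℕ,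
        |(∑ l ∈ Finset.Ico (i + 1 - n) (i + 1), ψ l) / (n : ℝ) ^ q| ^ p) ^ (1 / p) := by
  have hn' : (0 : ℝ) < n := Nat.cast_pos.2 hn
  have hterm (i : ℕ) : |(∑ l ∈ Finset.Ico (i + 1 - n) (i + 1), ψ l) / (n : ℝ) ^ q| ^ p =
      |∑ l ∈ Finset.Ico (i + 1 - n) (i + 1), ψ l| ^ p / ((n : ℝ) ^ q) ^ p := by
    rw [abs_div, abs_of_pos (Real.rpow_pos_of_pos hn' q),
      Real.div_rpow (abs_nonneg _) (by positivity)]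
  have hsum : 0 ≤ ∑' j : ℤ, |wCoef ψ n j| ^ p := tsum_nonneg fun j ↦ by positivity
  simp only [hterm]
  rw [tsum_div_const, ← tsum_abs_wCoef_rpow hp, Wnorm, inv_mul_eq_div, div_div,
    Real.div_rpow hsum (by positivity), Real.mul_rpow (by positivity) hn'.le,
    ← Real.rpow_mul (by positivity), mul_one_div_cancel hp, Real.rpow_one,
    Real.rpow_add hn', mul_comm]

lemma tendsto_inv_mul_tsum_abs_sum_Ico_div_rpow {A : ℝ} (hp : 0 ≤ p) (hq0 : 0 < q) (hq1 : q ≤ 1)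
    (hpq : (q - 1) * p < -1)
    (hψ : Tendsto (fun j : ℕ ↦ ψ j * ((j : ℝ) + 1) ^ (1 - q)) atTop (𝓝 A)) :
    Tendsto (fun n : ℕ ↦ (n : ℝ)⁻¹ * ∑' i : ℕ,
        |(∑ l ∈ Finset.Ico (i + 1 - n) (i + 1), ψ l) / (n : ℝ) ^ q| ^ p) atTop
      (𝓝 (∫ x in Ioi 0, |A / q * rpowIncrement q x| ^ p)) := by
  obtain ⟨C, hC⟩ := (Metric.isBounded_range_of_tendsto _ hψ).exists_norm_le
  replace hC (j : ℕ) : |ψ j * ((j : ℝ) + 1) ^ (1 - q)| ≤ C := hC _ (mem_range_self j)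
  have hC0 : 0 ≤ C := (abs_nonneg _).trans (hC 0)
  refine tendsto_inv_mul_tsum_of_dominated
    ((integrableOn_Ioi_max_one_rpow hpq).const_mul ((C / q) ^ p)) ?_ fun x hx ↦ ?_
  · filter_upwards [eventually_gt_atTop 0] with n hn x _
    have hxy : x ≤ ((⌊n * x⌋₊ + 1 : ℕ) : ℝ) / n := by
      rw [le_div_iff₀ (Nat.cast_pos.2 hn), mul_comm]
      push_cast
      exact (Nat.lt_floor_add_one _).le
    rw [Real.norm_of_nonneg (by positivity), Real.rpow_mul (by positivity),
      ← Real.mul_rpow (by positivity) (by positivity)]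
    refine Real.rpow_le_rpow (abs_nonneg _) ((abs_sum_Ico_div_le hq0 hq1 hC _ hn).trans ?_) hp
    gcongr
    exact (rpowIncrement_le hq0.le hq1 (by positivity)).trans
      (Real.rpow_le_rpow_of_nonpos (by positivity) (max_le_max_left 1 hxy) (by linarith))
  · exact (tendsto_sum_Ico_div_rpow hq0 hq1 hψ (tendsto_natFloor_add_one_div hx.le)).abs.rpow_const
      (Or.inr hp)

end Wnorm

theorem Wnorm_asymptotics_powerlaw_general {p d A : ℝ} {ψ : ℕ → ℝ} (hp : 0 < p)
    (hd1 : 1 / p < d) (hd2 : d < 1)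
    (hψ : Tendsto (fun j : ℕ ↦ ψ j * ((j : ℝ) + 1) ^ d) atTop (𝓝 A)) :
    Tendsto (fun n : ℕ ↦ Wnorm ψ p n / (n : ℝ) ^ (1 / p + 1 - d)) atTop
      (𝓝 (|A / (1 - d)| * (∫ x in Ioi 0, |rpowIncrement (1 - d) x| ^ p) ^ (1 / p))) := by
  have hd0 : 0 < d := lt_trans (by positivity) hd1
  have hdp : (1 - d - 1) * p < -1 := by linarith [(div_lt_iff₀ hp).1 hd1]
  have hlim := tendsto_inv_mul_tsum_abs_sum_Ico_div_rpow (q := 1 - d) hp.le (by linarith)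
    (by linarith) hdp (by rwa [sub_sub_cancel])
  rw [← rpow_integral_abs_const_mul hp.ne']
  refine (hlim.rpow_const (Or.inr (by positivity))).congr' ?_
  filter_upwards [eventually_gt_atTop 0] with n hn
  rw [add_sub_assoc, Wnorm_div_rpow hp.ne' ψ (1 - d) hn]

theorem Wnorm_asymptotics_powerlaw
    (p d : ℝ) (hp : 1 < p) (hd1 : 1 / p < d) (hd2 : d < 1)
    (ψ : ℕ → ℝ) (hψ : ∀ j : ℕ, ψ j = ((j : ℝ) + 1) ^ (-d)) :
    ∃ c : ℝ, 0 < c ∧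
      Tendsto (fun n : ℕ => Wnorm ψ p n / (n : ℝ) ^ (1 / p + 1 - d)) atTop (nhds c) := by
  have hψ' : Tendsto (fun j : ℕ ↦ ψ j * ((j : ℝ) + 1) ^ d) atTop (𝓝 1) :=
    tendsto_const_nhds.congr fun j ↦ by
      rw [hψ, ← Real.rpow_add j.cast_add_one_pos, neg_add_cancel, Real.rpow_zero]
  have hp0 : 0 < p := one_pos.trans hp
  have hd0 : 0 < d := (one_div_pos.2 hp0).trans hd1
  have hdp : (1 - d - 1) * p < -1 := by linarith [(div_lt_iff₀ hp0).1 hd1]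
  have hq : 0 < 1 - d := sub_pos.2 hd2
  have hint : 0 < ∫ x in Ioi 0, |rpowIncrement (1 - d) x| ^ p :=
    integral_abs_rpowIncrement_rpow_pos hq (by linarith) hp0.le hdp
  exact ⟨_, by positivity, Wnorm_asymptotics_powerlaw_general hp0 hd1 hd2 hψ'⟩
end

section
/- Let p>1 and 1/p<d<1. Then the sequence n^{-(1+p(1-d))}·Σ_{j=1}^∞ |Σ_{k=1}^n (k+j)^{-d}|^p converges as n→∞ to ∫_0^∞ |∫_0^1 (x+y)^{-d} dx|^p dy, and this limit is finite and positive. -/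
open Filter MeasureTheory intervalIntegral

/-!
Put `I y = ∫ x in 0..1, (x + y) ^ (-d)`. Comparing the sum of the decreasing function `t ^ (-d)`
over `t = j + 1, …, j + n` with its integral and rescaling by `n` gives
`n ^ (1 - d) * I ((j + 1) / n) ≤ ∑ (k + j) ^ (-d) ≤ n ^ (1 - d) * I (j / n)`, so that for `j ≥ 1`
the `j`-th term of the normalised series lies between `n⁻¹ * I ((j + 1) / n) ^ p` and
`n⁻¹ * I (j / n) ^ p`. As `I ^ p` is decreasing, the series is squeezed between the integrals of
`I ^ p` over `(2 / n, ∞)` and over `(0, ∞)`. The latter is finite because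
`I y ≤ y ^ (e - d) / (1 - e)` whenever `0 ≤ e ≤ d` and `e < 1`: near infinity take `e = 0`, near `0`
take `e` with `p * (d - e) < 1`.
-/

section

open Set Topology

section RiemannSum

theorem hasSum_intervalIntegral_of_monotone {E : Type*} [NormedAddCommGroup E] [NormedSpace ℝ E]
    {μ : Measure ℝ} {f : ℝ → E} {u : ℕ → ℝ} (hu : Monotone u) (hu_top : Tendsto u atTop atTop)
    (hf : IntegrableOn f (Ioi (u 0)) μ) :
    HasSum (fun j => ∫ y in u j..u (j + 1), f y ∂μ) (∫ y in Ioi (u 0), f y ∂μ) := by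
  have hunion : ⋃ j, Ioc (u j) (u (j + 1)) = Ioi (u 0) :=
    iUnion_Ioc_map_succ_eq_Ioi (fun j => hu j.zero_le) (not_bddAbove_of_tendsto_atTop hu_top)
  simp only [integral_of_le (hu (Nat.le_succ _)), ← hunion] at hf ⊢
  exact hasSum_integral_iUnion (fun _ => measurableSet_Ioc) hu.pairwise_disjoint_on_Ioc_succ hf

theorem hasSum_intervalIntegral_add_mul {E : Type*} [NormedAddCommGroup E] [NormedSpace ℝ E]
    {μ : Measure ℝ} {f : ℝ → E} {c h : ℝ} (hh : 0 < h) (hf : IntegrableOn f (Ioi (c * h)) μ) :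
    HasSum (fun j : ℕ => ∫ y in (j + c) * h..(j + c + 1) * h, f y ∂μ)
      (∫ y in Ioi (c * h), f y ∂μ) := by
  have hu : Monotone fun j : ℕ => (j + c) * h := fun i j hij => by
    have : (i : ℝ) ≤ j := Nat.cast_le.2 hij
    dsimp only
    gcongr
  have hu_top : Tendsto (fun j : ℕ => (j + c) * h) atTop atTop :=
    (tendsto_atTop_add_const_right _ c tendsto_natCast_atTop_atTop).atTop_mul_const hh
  simpa [add_right_comm] using hasSum_intervalIntegral_of_monotone hu hu_top (by simpa using hf)

theorem mul_le_intervalIntegral_of_antitoneOn {f : ℝ → ℝ} {a b : ℝ} (hab : a ≤ b)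
    (hf : AntitoneOn f (Ioc a b)) (hint : IntervalIntegrable f volume a b) :
    (b - a) * f b ≤ ∫ y in a..b, f y := by
  have h := integral_mono_on_of_le_Ioo hab
    (intervalIntegrable_const (μ := volume) (c := f b)) hint fun x hx =>
      hf (Ioo_subset_Ioc_self hx) ⟨hx.1.trans hx.2, le_rfl⟩ hx.2.le
  simpa using h

theorem intervalIntegral_le_mul_of_antitoneOn {f : ℝ → ℝ} {a b : ℝ} (hab : a ≤ b)
    (hf : AntitoneOn f (Icc a b)) : ∫ y in a..b, f y ≤ (b - a) * f a := by
  have h := integral_mono_on hab (AntitoneOn.intervalIntegrable (by rwa [uIcc_of_le hab]))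
    (intervalIntegrable_const (μ := volume) (c := f a)) fun x hx => hf (left_mem_Icc.2 hab) hx hx.1
  simpa using h

variable {f : ℝ → ℝ}

theorem tsum_mem_Icc_of_antitoneOn (hf : AntitoneOn f (Ioi 0)) (hint : IntegrableOn f (Ioi 0))
    {h : ℝ} (hh : 0 < h) {a : ℕ → ℝ}
    (ha : ∀ j : ℕ, a j ∈ Icc (h * f ((j + 2) * h)) (h * f ((j + 1) * h))) :
    ∑' j, a j ∈ Icc (∫ y in Ioi (2 * h), f y) (∫ y in Ioi 0, f y) := by
  have hupper := hasSum_intervalIntegral_add_mul hh (c := 0) (by rwa [zero_mul])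
  have hlower := hasSum_intervalIntegral_add_mul hh (c := 2)
    (hint.mono_set (Ioi_subset_Ioi (by positivity)))
  have le_upper (j : ℕ) : a j ≤ ∫ y in (j + 0) * h..(j + 0 + 1) * h, f y := by
    have hstep : ((j : ℝ) + 0) * h ≤ (j + 0 + 1) * h :=
      mul_le_mul_of_nonneg_right (le_add_of_nonneg_right zero_le_one) hh.le
    have hsub : Ioc (((j : ℝ) + 0) * h) ((j + 0 + 1) * h) ⊆ Ioi 0 := fun y hy =>
      lt_of_le_of_lt (by positivity) hy.1
    have := mul_le_intervalIntegral_of_antitoneOn hstep (hf.mono hsub)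
      ((intervalIntegrable_iff_integrableOn_Ioc_of_le hstep).2 (hint.mono_set hsub))
    refine (ha j).2.trans (le_of_eq_of_le ?_ this)
    ring_nf
  have lower_le (j : ℕ) : ∫ y in (j + 2) * h..(j + 2 + 1) * h, f y ≤ a j := by
    have hstep : ((j : ℝ) + 2) * h ≤ (j + 2 + 1) * h :=
      mul_le_mul_of_nonneg_right (le_add_of_nonneg_right zero_le_one) hh.le
    have hsub : Icc (((j : ℝ) + 2) * h) ((j + 2 + 1) * h) ⊆ Ioi 0 := fun y hy =>
      lt_of_lt_of_le (by positivity) hy.1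
    refine (intervalIntegral_le_mul_of_antitoneOn hstep (hf.mono hsub)).trans
      (le_of_eq_of_le ?_ (ha j).1)
    ring
  have hsummable : Summable a := by
    have := (hupper.summable.sub hlower.summable).of_nonneg_of_le
      (fun j => sub_nonneg.2 (lower_le j)) (fun j => sub_le_sub_right (le_upper j) _)
    simpa using this.add hlower.summable
  rw [zero_mul] at hupper
  exact ⟨hasSum_le lower_le hlower hsummable.hasSum, hasSum_le le_upper hsummable.hasSum hupper⟩

theorem tendsto_tsum_integral_of_antitoneOn (hf : AntitoneOn f (Ioi 0))
    (hint : IntegrableOn f (Ioi 0)) {ι : Type*} {l : Filter ι} {h : ι → ℝ}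
    (hh : Tendsto h l (𝓝[>] 0)) {a : ι → ℕ → ℝ}
    (ha : ∀ᶠ i in l, ∀ j : ℕ, a i j ∈ Icc (h i * f ((j + 2) * h i)) (h i * f ((j + 1) * h i))) :
    Tendsto (fun i => ∑' j, a i j) l (𝓝 (∫ y in Ioi 0, f y)) := by
  have hpos : ∀ᶠ i in l, 0 < h i := hh.eventually self_mem_nhdsWithin
  have hmem : ∀ᶠ i in l, ∑' j, a i j ∈ Icc (∫ y in Ioi (2 * h i), f y) (∫ y in Ioi 0, f y) := by
    filter_upwards [hpos, ha] with i hi hai using tsum_mem_Icc_of_antitoneOn hf hint hi hai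
  have hcut : Tendsto (fun i => 2 * h i) l (𝓝[≥] 0) := by
    refine tendsto_nhdsWithin_iff.2 ⟨?_, hpos.mono fun i hi => mem_Ici.2 (by positivity)⟩
    simpa using (tendsto_nhds_of_tendsto_nhdsWithin hh).const_mul 2
  exact tendsto_of_tendsto_of_tendsto_of_le_of_le'
    (hint.continuousWithinAt_Ici_primitive_Ioi.tendsto.comp hcut) tendsto_const_nhds
    (hmem.mono fun _ hi => hi.1) (hmem.mono fun _ hi => hi.2)

end RiemannSum

theorem setIntegral_pos_of_forall_pos {α : Type*} [MeasurableSpace α] {μ : Measure α} {s : Set α}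
    {f : α → ℝ} (hs : MeasurableSet s) (hμs : μ s ≠ 0) (hf : ∀ x ∈ s, 0 < f x)
    (hint : IntegrableOn f s μ) : 0 < ∫ x in s, f x ∂μ := by
  rw [setIntegral_pos_iff_support_of_nonneg_ae
    (ae_restrict_of_forall_mem hs fun x hx => (hf x hx).le) hint,
    inter_eq_right.2 (show s ⊆ Function.support f from fun x hx => (hf x hx).ne')]
  exact pos_iff_ne_zero.2 hμs

theorem sum_Icc_comp_add_mem_Icc {g : ℝ → ℝ} {y : ℝ} (hg : AntitoneOn g (Ici y)) (n : ℕ) :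
    ∑ k ∈ Finset.Icc 1 n, g (k + y) ∈
      Icc (∫ t in y + 1..y + 1 + n, g t) (∫ t in y..y + n, g t) := by
  have hsum : ∑ k ∈ Finset.Icc 1 n, g (k + y) = ∑ i ∈ Finset.range n, g (y + ↑(i + 1)) := by
    rw [← Finset.Ico_succ_right_eq_Icc, Finset.sum_Ico_eq_sum_range]
    exact Finset.sum_congr rfl fun i _ => by rw [add_comm y, add_comm 1 i]
  have anti (z : ℝ) (hz : y ≤ z) : AntitoneOn g (Icc z (z + n)) :=
    hg.mono fun t ht => hz.trans ht.1
  rw [hsum]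
  refine ⟨(anti (y + 1) (by simp)).integral_le_sum.trans_eq ?_, (anti y le_rfl).sum_le_integral⟩
  exact Finset.sum_congr rfl fun i _ => by push_cast; ring_nf

/-- The limit profile `y ↦ ∫₀¹ (x + y) ^ (-d) dx` of the sums `∑ (k + j) ^ (-d)`, at the scale
`y = j / n`. It is meant for `0 < y`; for `1 ≤ d` its value at `0` is junk. -/
noncomputable def shiftedRpowIntegral (d y : ℝ) : ℝ :=
  ∫ x in (0 : ℝ)..1, (x + y) ^ (-d)

namespace shiftedRpowIntegral

variable {d y : ℝ}

theorem intervalIntegrable_add_rpow (hy : 0 < y) (r : ℝ) :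
    IntervalIntegrable (fun x => (x + y) ^ r) volume 0 1 := by
  refine ContinuousOn.intervalIntegrable fun x hx => ?_
  rw [uIcc_of_le zero_le_one] at hx
  have : x + y ≠ 0 := (add_pos_of_nonneg_of_pos hx.1 hy).ne'
  exact ContinuousAt.continuousWithinAt (by fun_prop (disch := simp [this]))

protected theorem pos (hy : 0 < y) : 0 < shiftedRpowIntegral d y :=
  intervalIntegral_pos_of_pos_on (intervalIntegrable_add_rpow hy _)
    (fun _ hx => Real.rpow_pos_of_pos (add_pos hx.1 hy) _) one_pos

protected theorem antitoneOn (hd : 0 ≤ d) : AntitoneOn (shiftedRpowIntegral d) (Ioi 0) :=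
  fun y hy z hz hyz => integral_mono_on zero_le_one (intervalIntegrable_add_rpow hz _)
    (intervalIntegrable_add_rpow hy _) fun x hx =>
      Real.rpow_le_rpow_of_nonpos (add_pos_of_nonneg_of_pos hx.1 hy) (by gcongr)
        (neg_nonpos.2 hd)

theorem integral_rpow_neg_mul {c : ℝ} (hc : 0 < c) (hy : 0 ≤ y) :
    ∫ t in c * y..c * y + c, t ^ (-d) = c ^ (1 - d) * shiftedRpowIntegral d y := by
  have hscale : ∫ x in (0 : ℝ)..1, (c * x + c * y) ^ (-d) =
      c ^ (-d) * shiftedRpowIntegral d y := by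
    rw [shiftedRpowIntegral, ← intervalIntegral.integral_const_mul]
    refine integral_congr fun x hx => ?_
    rw [uIcc_of_le zero_le_one] at hx
    simp only [← mul_add, Real.mul_rpow hc.le (add_nonneg hx.1 hy)]
  have hsubst := mul_integral_comp_mul_add (a := 0) (b := 1) (f := fun t : ℝ => t ^ (-d)) c (c * y)
  rw [hscale, mul_zero, zero_add, mul_one, add_comm c] at hsubst
  rw [← hsubst, ← mul_assoc, sub_eq_add_neg, Real.rpow_add hc, Real.rpow_one]

theorem le_rpow_sub_div {e : ℝ} (he0 : 0 ≤ e) (hed : e ≤ d) (he1 : e < 1) (hy : 0 < y) :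
    shiftedRpowIntegral d y ≤ y ^ (e - d) / (1 - e) := by
  have hint : IntervalIntegrable (fun x : ℝ => x ^ (-e)) volume 0 1 :=
    intervalIntegrable_rpow' (by linarith)
  have hle (x : ℝ) (hx : x ∈ Ioo (0 : ℝ) 1) : (x + y) ^ (-d) ≤ x ^ (-e) * y ^ (e - d) := by
    have hxy : 0 < x + y := add_pos hx.1 hy
    calc (x + y) ^ (-d) = (x + y) ^ (-e) * (x + y) ^ (e - d) := by
          rw [← Real.rpow_add hxy]; ring_nf
      _ ≤ x ^ (-e) * y ^ (e - d) := by
          refine mul_le_mul ?_ ?_ (by positivity) (Real.rpow_nonneg hx.1.le _)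
          · exact Real.rpow_le_rpow_of_nonpos hx.1 (by linarith) (by linarith)
          · exact Real.rpow_le_rpow_of_nonpos hy (by linarith [hx.1]) (by linarith)
  calc shiftedRpowIntegral d y ≤ ∫ x in (0 : ℝ)..1, x ^ (-e) * y ^ (e - d) :=
        integral_mono_on_of_le_Ioo zero_le_one (intervalIntegrable_add_rpow hy _)
          (hint.mul_const _) hle
    _ = y ^ (e - d) / (1 - e) := by
        rw [intervalIntegral.integral_mul_const, integral_rpow (Or.inl (by linarith)),
          Real.one_rpow, Real.zero_rpow (by linarith)]
        ring

variable {p : ℝ}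

theorem antitoneOn_rpow (hp : 0 ≤ p) (hd : 0 ≤ d) :
    AntitoneOn (fun y => shiftedRpowIntegral d y ^ p) (Ioi 0) :=
  fun _ hy _ hz hyz => Real.rpow_le_rpow (shiftedRpowIntegral.pos hz).le
    (shiftedRpowIntegral.antitoneOn hd hy hz hyz) hp

theorem integrableOn_rpow_of_integrableOn_rpow_sub {s : Set ℝ} {e : ℝ} (hs : MeasurableSet s)
    (hs0 : s ⊆ Ioi 0) (hp : 0 ≤ p) (he0 : 0 ≤ e) (hed : e ≤ d) (he1 : e < 1)
    (hint : IntegrableOn (fun y => y ^ (p * (e - d))) s) :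
    IntegrableOn (fun y => shiftedRpowIntegral d y ^ p) s := by
  have hmeas := aemeasurable_restrict_of_antitoneOn (μ := volume) hs
    ((antitoneOn_rpow hp (he0.trans hed)).mono hs0)
  refine (hint.div_const ((1 - e) ^ p)).mono' hmeas.aestronglyMeasurable
    (ae_restrict_of_forall_mem hs fun y hy => ?_)
  have hy0 : 0 < y := hs0 hy
  have hpos := shiftedRpowIntegral.pos (d := d) hy0
  rw [Real.norm_of_nonneg (Real.rpow_nonneg hpos.le p), mul_comm p, Real.rpow_mul hy0.le,
    ← Real.div_rpow (by positivity) (sub_nonneg.2 he1.le)]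
  exact Real.rpow_le_rpow hpos.le (le_rpow_sub_div he0 hed he1 hy0) hp

theorem integrableOn_rpow (hp : 0 < p) (hd1 : 1 / p < d) (hd2 : d < 1 + 1 / p) :
    IntegrableOn (fun y => shiftedRpowIntegral d y ^ p) (Ioi 0) := by
  have hp' : 0 < 1 / p := one_div_pos.2 hp
  have hd : 0 < d := hp'.trans hd1
  obtain ⟨e, he_gt, he_lt⟩ : ∃ e, max 0 (d - 1 / p) < e ∧ e < min 1 d :=
    exists_between (max_lt (lt_min one_pos hd) (lt_min (by linarith) (by linarith)))
  obtain ⟨he0, hde⟩ := max_lt_iff.1 he_gt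
  obtain ⟨he1, hed⟩ := lt_min_iff.1 he_lt
  have near_zero : -1 < p * (e - d) := by
    have := (lt_div_iff₀' hp).1 (sub_lt_comm.1 hde)
    linarith
  have near_top : p * (0 - d) < -1 := by
    have := (div_lt_iff₀' hp).1 hd1
    linarith
  rw [← Ioc_union_Ioi_eq_Ioi (zero_le_one (α := ℝ))]
  exact (integrableOn_rpow_of_integrableOn_rpow_sub measurableSet_Ioc Ioc_subset_Ioi_self hp.le
      he0.le hed.le he1 (intervalIntegrable_rpow' near_zero).1).union
    (integrableOn_rpow_of_integrableOn_rpow_sub measurableSet_Ioi (Ioi_subset_Ioi zero_le_one) hp.le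
      le_rfl hd.le one_pos (integrableOn_Ioi_rpow_of_lt near_top one_pos))

theorem sum_Icc_rpow_neg_mem_Icc (hd : 0 ≤ d) (hy : 0 < y) {n : ℕ} (hn : 0 < n) :
    ∑ k ∈ Finset.Icc 1 n, ((k : ℝ) + y) ^ (-d) ∈
      Icc ((n : ℝ) ^ (1 - d) * shiftedRpowIntegral d ((y + 1) / n))
        ((n : ℝ) ^ (1 - d) * shiftedRpowIntegral d (y / n)) := by
  have hn' : (0 : ℝ) < n := Nat.cast_pos.2 hn
  rw [← integral_rpow_neg_mul hn' (by positivity), ← integral_rpow_neg_mul hn' (by positivity),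
    mul_div_cancel₀ _ hn'.ne', mul_div_cancel₀ _ hn'.ne']
  exact sum_Icc_comp_add_mem_Icc ((Real.antitoneOn_rpow_Ioi_of_exponent_nonpos
    (neg_nonpos.2 hd)).mono (Ici_subset_Ioi.2 hy)) n

theorem rpow_mul_abs_sum_rpow_mem_Icc (hp : 0 ≤ p) (hd : 0 ≤ d) (hy : 0 < y) {n : ℕ} (hn : 0 < n) :
    (n : ℝ) ^ (-(1 + p * (1 - d))) * |∑ k ∈ Finset.Icc 1 n, ((k : ℝ) + y) ^ (-d)| ^ p ∈
      Icc ((n : ℝ)⁻¹ * shiftedRpowIntegral d ((y + 1) / n) ^ p)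
        ((n : ℝ)⁻¹ * shiftedRpowIntegral d (y / n) ^ p) := by
  have hn' : (0 : ℝ) < n := Nat.cast_pos.2 hn
  have hscale (z : ℝ) (hz : 0 < z) : (n : ℝ)⁻¹ * shiftedRpowIntegral d z ^ p =
      (n : ℝ) ^ (-(1 + p * (1 - d))) * ((n : ℝ) ^ (1 - d) * shiftedRpowIntegral d z) ^ p := by
    rw [Real.mul_rpow (by positivity) (shiftedRpowIntegral.pos hz).le, ← Real.rpow_mul hn'.le,
      ← mul_assoc, ← Real.rpow_add hn', ← Real.rpow_neg_one]
    ring_nf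
  have hlower : 0 ≤ (n : ℝ) ^ (1 - d) * shiftedRpowIntegral d ((y + 1) / n) :=
    mul_nonneg (by positivity) (shiftedRpowIntegral.pos (by positivity)).le
  have hsum := sum_Icc_rpow_neg_mem_Icc hd hy hn
  rw [hscale _ (by positivity), hscale _ (by positivity), abs_of_nonneg (hlower.trans hsum.1)]
  constructor <;> gcongr
  exacts [hsum.1, hsum.2]

end shiftedRpowIntegral

end

theorem sum_power_tail_tendsto_integral_general
    (p d : ℝ) (hp : 0 < p) (hd1 : 1 / p < d) (hd2 : d < 1 + 1 / p) :
    IntegrableOn (fun y : ℝ => |∫ x in (0:ℝ)..1, (x + y) ^ (-d)| ^ p) (Set.Ioi 0) volume ∧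
    0 < ∫ y in Set.Ioi (0:ℝ), |∫ x in (0:ℝ)..1, (x + y) ^ (-d)| ^ p ∧
    Tendsto
      (fun n : ℕ => (n : ℝ) ^ (-(1 + p * (1 - d))) *
        ∑' j : ℕ, |∑ k ∈ Finset.Icc 1 n, ((k : ℝ) + ((j : ℝ) + 1)) ^ (-d)| ^ p)
      atTop
      (nhds (∫ y in Set.Ioi (0:ℝ), |∫ x in (0:ℝ)..1, (x + y) ^ (-d)| ^ p)) := by
  have hd : 0 < d := lt_trans (by positivity) hd1
  have habs : Set.EqOn (fun y : ℝ => |∫ x in (0:ℝ)..1, (x + y) ^ (-d)| ^ p)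
      (fun y => shiftedRpowIntegral d y ^ p) (Set.Ioi 0) := fun y hy =>
    congrArg (· ^ p) (abs_of_pos (shiftedRpowIntegral.pos hy))
  have hint := shiftedRpowIntegral.integrableOn_rpow hp hd1 hd2
  rw [integrableOn_congr_fun habs measurableSet_Ioi, setIntegral_congr_fun measurableSet_Ioi habs]
  refine ⟨hint, setIntegral_pos_of_forall_pos measurableSet_Ioi (by simp)
    (fun y hy => Real.rpow_pos_of_pos (shiftedRpowIntegral.pos hy) p) hint, ?_⟩
  simp only [← tsum_mul_left]
  refine tendsto_tsum_integral_of_antitoneOn (shiftedRpowIntegral.antitoneOn_rpow hp.le hd.le) hint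
    (tendsto_inv_atTop_nhdsGT_zero.comp tendsto_natCast_atTop_atTop) ?_
  filter_upwards [eventually_gt_atTop 0] with n hn j
  have hmem := shiftedRpowIntegral.rpow_mul_abs_sum_rpow_mem_Icc hp.le hd.le
    (y := (j : ℝ) + 1) (by positivity) hn
  rwa [add_assoc, one_add_one_eq_two, div_eq_mul_inv, div_eq_mul_inv] at hmem

theorem sum_power_tail_tendsto_integral
    (p d : ℝ) (hp : 1 < p) (hd1 : 1 / p < d) (hd2 : d < 1) :
    IntegrableOn (fun y : ℝ => |∫ x in (0:ℝ)..1, (x + y) ^ (-d)| ^ p) (Set.Ioi 0) volume ∧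
    0 < ∫ y in Set.Ioi (0:ℝ), |∫ x in (0:ℝ)..1, (x + y) ^ (-d)| ^ p ∧
    Tendsto
      (fun n : ℕ => (n : ℝ) ^ (-(1 + p * (1 - d))) *
        ∑' j : ℕ, |∑ k ∈ Finset.Icc 1 n, ((k : ℝ) + ((j : ℝ) + 1)) ^ (-d)| ^ p)
      atTop
      (nhds (∫ y in Set.Ioi (0:ℝ), |∫ x in (0:ℝ)..1, (x + y) ^ (-d)| ^ p)) :=
  sum_power_tail_tendsto_integral_general p d (one_pos.trans hp) hd1
    (hd2.trans (lt_add_of_pos_right 1 (one_div_pos.2 (one_pos.trans hp))))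
end

section
/- Let 1≤p<2 and let {ψ_j : j≥0} ⊂ ℝ satisfy Σ_{j=0}^∞ |ψ_j|^p < ∞. If 𝒲_n(p) → ∞ as n→∞, then (sup_{j∈ℤ} |w_{nj}|)/𝒲_n(p) → 0 as n→∞. -/
open Filter

/-!
Since `w_{n,j+1} - w_{nj} = ψ_{-j} - ψ_{n-j}`, the increments of `j ↦ w_{nj}` are bounded by some
`D` uniformly in `n`. Hence `|w_{nk}| ≥ |w_{nj}| - D m` for `j ≤ k < j + m`, and comparing the
`ℓ^p` sum over this block with `𝒲_n(p)` gives `|w_{nj}| ≤ D m + m^{-1/p} 𝒲_n(p)` for every `m ≥ 1`.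
Divide by `𝒲_n(p)`, let `n → ∞`, then `m → ∞`.
-/

open scoped Topology

theorem dist_le_mul_of_dist_add_one_le {X : Type*} [PseudoMetricSpace X] {a : ℤ → X} {D : ℝ}
    (hD : ∀ j, dist (a j) (a (j + 1)) ≤ D) {j k : ℤ} (hjk : j ≤ k) :
    dist (a j) (a k) ≤ D * (k - j) := by
  induction k, hjk using Int.leInduction with
  | base => simp
  | succ k _ ih =>
    calc dist (a j) (a (k + 1))
        ≤ dist (a j) (a k) + dist (a k) (a (k + 1)) := dist_triangle _ _ _
      _ ≤ D * (k - j) + D := add_le_add ih (hD k)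
      _ = D * ((k + 1 : ℤ) - j) := by push_cast; ring

section BoundedIncrements

variable {E : Type*} [SeminormedAddCommGroup E] {p D : ℝ}

theorem natCast_mul_rpow_norm_sub_le_tsum {a : ℤ → E} (hp : 0 ≤ p)
    (hD : ∀ j, ‖a j - a (j + 1)‖ ≤ D) (ha : Summable fun j ↦ ‖a j‖ ^ p) {j : ℤ} {m : ℕ}
    (hm : D * m ≤ ‖a j‖) : m * (‖a j‖ - D * m) ^ p ≤ ∑' k, ‖a k‖ ^ p := by
  have hD₀ : 0 ≤ D := (norm_nonneg _).trans (hD 0)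
  have hblock : ∀ k ∈ Finset.Ico j (j + m), (‖a j‖ - D * m) ^ p ≤ ‖a k‖ ^ p := by
    intro k hk
    obtain ⟨hjk, hkm⟩ := Finset.mem_Ico.mp hk
    refine Real.rpow_le_rpow (sub_nonneg.mpr hm) ?_ hp
    have hdist : ‖a j - a k‖ ≤ D * (k - j) := by
      simpa only [dist_eq_norm] using
        dist_le_mul_of_dist_add_one_le (fun i ↦ (dist_eq_norm _ _).trans_le (hD i)) hjk
    have hlen : D * (k - j) ≤ D * m :=
      mul_le_mul_of_nonneg_left (sub_le_iff_le_add'.mpr (mod_cast hkm.le)) hD₀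
    linarith [norm_sub_norm_le (a j) (a k)]
  calc m * (‖a j‖ - D * m) ^ p
      = (Finset.Ico j (j + m)).card • (‖a j‖ - D * m) ^ p := by simp
    _ ≤ ∑ k ∈ Finset.Ico j (j + m), ‖a k‖ ^ p := Finset.card_nsmul_le_sum _ _ _ hblock
    _ ≤ ∑' k, ‖a k‖ ^ p := ha.sum_le_tsum _ fun k _ ↦ by positivity

theorem norm_le_mul_add_mul_rpow_tsum {a : ℤ → E} (hp : 0 < p)
    (hD : ∀ j, ‖a j - a (j + 1)‖ ≤ D) (ha : Summable fun j ↦ ‖a j‖ ^ p) (j : ℤ) {m : ℕ}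
    (hm : 0 < m) : ‖a j‖ ≤ D * m + (m : ℝ)⁻¹ ^ (1 / p) * (∑' k, ‖a k‖ ^ p) ^ (1 / p) := by
  have hsum : 0 ≤ ∑' k, ‖a k‖ ^ p := tsum_nonneg fun k ↦ by positivity
  rw [← sub_le_iff_le_add', ← Real.mul_rpow (by positivity) hsum]
  rcases le_total ‖a j‖ (D * m) with h | h
  · exact (sub_nonpos.mpr h).trans (by positivity)
  · rw [one_div, Real.le_rpow_inv_iff_of_pos (sub_nonneg.mpr h) (by positivity) hp,
      le_inv_mul_iff₀ (mod_cast hm)]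
    exact natCast_mul_rpow_norm_sub_le_tsum hp.le hD ha h

theorem tendsto_iSup_norm_div_rpow_tsum {ι : Type*} {l : Filter ι} {a : ι → ℤ → E} (hp : 0 < p)
    (hD : ∀ n j, ‖a n j - a n (j + 1)‖ ≤ D) (ha : ∀ n, Summable fun j ↦ ‖a n j‖ ^ p)
    (hlim : Tendsto (fun n ↦ (∑' j, ‖a n j‖ ^ p) ^ (1 / p)) l atTop) :
    Tendsto (fun n ↦ (⨆ j, ‖a n j‖) / (∑' j, ‖a n j‖ ^ p) ^ (1 / p)) l (𝓝 0) := by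
  set N : ι → ℝ := fun n ↦ (∑' j, ‖a n j‖ ^ p) ^ (1 / p)
  have hroot : Tendsto (fun m : ℕ ↦ (m : ℝ)⁻¹ ^ (1 / p)) atTop (𝓝 0) := by
    simpa [hp.ne'] using (tendsto_inv_atTop_nhds_zero_nat (𝕜 := ℝ)).rpow_const
      (p := 1 / p) (Or.inr (by positivity))
  refine tendsto_order.mpr ⟨fun ε hε ↦ ?_, fun ε hε ↦ ?_⟩
  · filter_upwards [hlim.eventually_gt_atTop 0] with n hn
    exact hε.trans_le (div_nonneg (Real.iSup_nonneg fun j ↦ norm_nonneg _) hn.le)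
  obtain ⟨m, hmε, hm⟩ := ((hroot.eventually_lt_const hε).and (eventually_gt_atTop 0)).exists
  have hbound : Tendsto (fun n ↦ D * m / N n + (m : ℝ)⁻¹ ^ (1 / p)) l
      (𝓝 ((m : ℝ)⁻¹ ^ (1 / p))) := by
    simpa using (hlim.const_div_atTop (D * m)).add_const ((m : ℝ)⁻¹ ^ (1 / p))
  filter_upwards [hlim.eventually_gt_atTop 0, hbound.eventually_lt_const hmε] with n hn hnε
  calc (⨆ j, ‖a n j‖) / N n
      ≤ (D * m + (m : ℝ)⁻¹ ^ (1 / p) * N n) / N n := by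
        gcongr
        exact ciSup_le fun j ↦ norm_le_mul_add_mul_rpow_tsum hp (hD n) (ha n) j hm
    _ = D * m / N n + (m : ℝ)⁻¹ ^ (1 / p) := by rw [add_div, mul_div_cancel_right₀ _ hn.ne']
    _ < ε := hnε

end BoundedIncrements

section Coefficients

variable {ψ : ℕ → ℝ} {p : ℝ}

theorem summable_abs_psiZ_rpow (hp : p ≠ 0) (hψ : Summable fun j ↦ |ψ j| ^ p) :
    Summable fun j ↦ |psiZ ψ j| ^ p := by
  refine ((Nat.cast_injective (R := ℤ)).summable_iff ?_).mp ?_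
  · intro j hj
    have hneg : ¬ 0 ≤ j := fun h ↦ hj ⟨j.toNat, Int.toNat_of_nonneg h⟩
    simp [psiZ, hneg, hp]
  · simpa [psiZ, Function.comp_def] using hψ

theorem exists_abs_psiZ_le (hp : 0 < p) (hψ : Summable fun j ↦ |ψ j| ^ p) :
    ∃ C, ∀ j, |psiZ ψ j| ≤ C := by
  have hmem : Memℓp (psiZ ψ) (ENNReal.ofReal p) :=
    memℓp_gen (by simpa [hp.le] using summable_abs_psiZ_rpow hp.ne' hψ)
  obtain ⟨C, hC⟩ := memℓp_infty_iff.mp (hmem.of_exponent_ge le_top)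
  exact ⟨C, fun j ↦ hC ⟨j, rfl⟩⟩

theorem summable_abs_wCoef_rpow (hp : 0 < p) (hψ : Summable fun j ↦ |ψ j| ^ p) (n : ℕ) :
    Summable fun j ↦ |wCoef ψ n j| ^ p := by
  have hshift (k : ℤ) : Memℓp (fun j ↦ psiZ ψ (k - j)) (ENNReal.ofReal p) :=
    memℓp_gen (by
      simpa [hp.le, Function.comp_def] using
        (summable_abs_psiZ_rpow hp.ne' hψ).comp_injective (sub_right_injective (b := k)))
  have hmem : Memℓp (wCoef ψ n) (ENNReal.ofReal p) :=
    Memℓp.finsetSum (Finset.Icc (1 : ℤ) n) fun k _ ↦ hshift k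
  simpa [hp.le] using hmem.summable (by simpa [hp.le] using hp)

theorem wCoef_succ (ψ : ℕ → ℝ) (n : ℕ) (j : ℤ) :
    wCoef ψ (n + 1) j = wCoef ψ n j + psiZ ψ (n + 1 - j) := by
  rw [wCoef, Nat.cast_succ, ← Finset.insert_Icc_right_eq_Icc_add_one (by omega),
    Finset.sum_insert (by simp), add_comm, wCoef]

theorem wCoef_sub_wCoef_add_one (ψ : ℕ → ℝ) (n : ℕ) (j : ℤ) :
    wCoef ψ n j - wCoef ψ n (j + 1) = psiZ ψ (n - j) - psiZ ψ (-j) := by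
  induction n with
  | zero => simp [wCoef]
  | succ n ih =>
    rw [wCoef_succ, wCoef_succ, add_sub_add_right_eq_sub]
    push_cast
    linarith

theorem abs_wCoef_sub_wCoef_add_one_le {C : ℝ} (hC : ∀ j, |psiZ ψ j| ≤ C) (n : ℕ) (j : ℤ) :
    |wCoef ψ n j - wCoef ψ n (j + 1)| ≤ C + C := by
  rw [wCoef_sub_wCoef_add_one]
  exact (abs_sub _ _).trans (add_le_add (hC _) (hC _))

end Coefficients

theorem sup_wCoef_div_Wnorm_tendsto_zero_general {p : ℝ} (hp : 0 < p) {ψ : ℕ → ℝ}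
    (hψ : Summable fun j ↦ |ψ j| ^ p) (hW : Tendsto (fun n ↦ Wnorm ψ p n) atTop atTop) :
    Tendsto (fun n : ℕ ↦ (⨆ j : ℤ, |wCoef ψ n j|) / Wnorm ψ p n) atTop (𝓝 0) := by
  obtain ⟨C, hC⟩ := exists_abs_psiZ_le hp hψ
  simp only [Wnorm, ← Real.norm_eq_abs] at hW ⊢
  exact tendsto_iSup_norm_div_rpow_tsum hp (abs_wCoef_sub_wCoef_add_one_le hC)
    (summable_abs_wCoef_rpow hp hψ) hW

theorem sup_wCoef_div_Wnorm_tendsto_zero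
    (p : ℝ) (hp1 : 1 ≤ p) (hp2 : p < 2)
    (ψ : ℕ → ℝ) (hψ : Summable fun j => |ψ j| ^ p)
    (hW : Tendsto (fun n => Wnorm ψ p n) atTop atTop) :
    Tendsto (fun n : ℕ => (⨆ j : ℤ, |wCoef ψ n j|) / Wnorm ψ p n) atTop (nhds 0) :=
  sup_wCoef_div_Wnorm_tendsto_zero_general (by linarith) hψ hW
end
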